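/- Let v, d, V be reals with b_max·Δt ≤ v, d ≥ 0, V ≥ 0, and B_ex(v) ≤ d + B_ex(V). Then the deceleration a := −b_max belongs to the compliance set S for the constraint (d, V): indeed v − b_max·Δt ≥ 0; if d > 0 then v·Δt − b_max·Δt²/2 + B_ex(v − b_max·Δt) ≤ d + B_ex(V); and if d = 0 then v − b_max·Δt ≤ V. -/

import Mathlib

/-!
For `0 < d` the required inequality is the recursion for `Bex v` unfolded once. For `d = 0` the
hypothesis reads `Bex v ≤ Bex V`, and since `Bex` is strictly increasing on `[0, ∞)` this yields
`v ≤ V`.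

The two branches of the recursion agree at `bmax * Δt`, so `Bex` is linear with positive slope on
the closed interval `[0, bmax * Δt]`; each unfolding then carries strict monotonicity one step of
length `bmax * Δt` further, and consecutive closed intervals share an endpoint.
-/

/-- The compliance set `S` for a single speed-limit constraint `(d, V)`, given current
speed `v`, maximal deceleration `bmax`, maximal acceleration `amax`, control period `Δt`
and the braking function `Bex`:
`S = { a ∈ [−bmax, amax] : v + a·Δt ≥ 0, and (d > 0 and
v·Δt + a·Δt²/2 + Bex (v + a·Δt) ≤ d + Bex V) or (d = 0 and v + a·Δt ≤ V) }`. -/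
def compSet (bmax amax Δt : ℝ) (Bex : ℝ → ℝ) (v d V : ℝ) : Set ℝ :=
  {a | a ∈ Set.Icc (-bmax) amax ∧ 0 ≤ v + a * Δt ∧
    ((0 < d ∧ v * Δt + a * Δt ^ 2 / 2 + Bex (v + a * Δt) ≤ d + Bex V) ∨
     (d = 0 ∧ v + a * Δt ≤ V))}

open Set

section ShiftRecurrence

variable {α β : Type*} [AddCommGroup α] [Add β] [Preorder β] [AddLeftStrictMono β]
  [AddRightMono β] {f g : α → β} {a b c : α}

theorem strictMonoOn_Icc_add_const_of_map_add_const [PartialOrder α] [IsOrderedAddMonoid α]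
    (hg : MonotoneOn g (Icc a b)) (hf : StrictMonoOn f (Icc a b))
    (hfg : ∀ x ∈ Icc a b, f (x + c) = g x + f x) :
    StrictMonoOn f (Icc (a + c) (b + c)) := by
  rw [← image_add_const_Icc]
  rintro _ ⟨x, hx, rfl⟩ _ ⟨y, hy, rfl⟩ hxy
  rw [hfg x hx, hfg y hy]
  have hxy' : x < y := lt_of_add_lt_add_right hxy
  exact add_lt_add_of_le_of_lt (hg hx hy hxy'.le) (hf hx hy hxy')

theorem strictMonoOn_Ici_of_map_add_const [LinearOrder α] [IsOrderedAddMonoid α]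
    [Archimedean α] (hc : 0 < c) (hg : MonotoneOn g (Ici a)) (hf : StrictMonoOn f (Icc a (a + c)))
    (hfg : ∀ x ∈ Ici a, f (x + c) = g x + f x) :
    StrictMonoOn f (Ici a) := by
  have strictMonoOn_Icc (n : ℕ) : StrictMonoOn f (Icc a (a + n • c)) := by
    induction n with
    | zero => simp
    | succ n ih =>
      have hshift : StrictMonoOn f (Icc (a + c) (a + n • c + c)) :=
        strictMonoOn_Icc_add_const_of_map_add_const (hg.mono Icc_subset_Ici_self) ih
          fun x hx ↦ hfg x hx.1
      have hac : a ≤ a + c := le_add_of_nonneg_right hc.le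
      have hcn : a + c ≤ a + n • c + c := by
        gcongr
        exact le_add_of_nonneg_right (nsmul_nonneg hc.le n)
      rw [succ_nsmul, ← add_assoc, ← Icc_union_Icc_eq_Icc hac hcn]
      exact hf.union hshift (isGreatest_Icc hac) (isLeast_Icc hcn)
  intro x hx y hy hxy
  obtain ⟨n, hn⟩ := Archimedean.arch (y - a) hc
  have hyn : y ≤ a + n • c := sub_le_iff_le_add'.mp hn
  exact strictMonoOn_Icc n ⟨hx, hxy.le.trans hyn⟩ ⟨hy, hyn⟩ hxy

end ShiftRecurrence

section BrakingFunction

variable {bmax Δt : ℝ} {Bex : ℝ → ℝ}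

theorem eqOn_Icc_of_braking_recursion (hc : 0 < bmax * Δt)
    (hBex1 : ∀ v, 0 ≤ v → v < bmax * Δt → Bex v = v * Δt / 2)
    (hBex2 : ∀ v, bmax * Δt ≤ v → Bex v = v * Δt - bmax * Δt ^ 2 / 2 + Bex (v - bmax * Δt)) :
    EqOn Bex (fun v ↦ v * Δt / 2) (Icc 0 (bmax * Δt)) := by
  rintro v ⟨hv0, hvc⟩
  rcases hvc.lt_or_eq with hlt | rfl
  · exact hBex1 v hv0 hlt
  · rw [hBex2 _ le_rfl, sub_self, hBex1 0 le_rfl hc]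
    ring

theorem strictMonoOn_Ici_of_braking_recursion (hb : 0 < bmax) (ht : 0 < Δt)
    (hBex1 : ∀ v, 0 ≤ v → v < bmax * Δt → Bex v = v * Δt / 2)
    (hBex2 : ∀ v, bmax * Δt ≤ v → Bex v = v * Δt - bmax * Δt ^ 2 / 2 + Bex (v - bmax * Δt)) :
    StrictMonoOn Bex (Ici 0) := by
  have hc : 0 < bmax * Δt := mul_pos hb ht
  refine strictMonoOn_Ici_of_map_add_const (c := bmax * Δt)
    (g := fun v ↦ (v + bmax * Δt) * Δt - bmax * Δt ^ 2 / 2) hc ?mono ?base ?recurrence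
  case mono =>
    intro x _ y _ hxy
    dsimp only
    gcongr
  case base =>
    rw [zero_add]
    refine StrictMonoOn.congr (fun x _ y _ hxy ↦ ?_)
      (eqOn_Icc_of_braking_recursion hc hBex1 hBex2).symm
    gcongr
  case recurrence =>
    intro v hv
    rw [hBex2 _ (le_add_of_nonneg_left hv), add_sub_cancel_right]

end BrakingFunction

theorem mem_compSet_iff {bmax amax Δt : ℝ} {Bex : ℝ → ℝ} {v d V a : ℝ} (hd : 0 ≤ d) :
    a ∈ compSet bmax amax Δt Bex v d V ↔
      a ∈ Icc (-bmax) amax ∧ 0 ≤ v + a * Δt ∧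
      (0 < d → v * Δt + a * Δt ^ 2 / 2 + Bex (v + a * Δt) ≤ d + Bex V) ∧
      (d = 0 → v + a * Δt ≤ V) := by
  rcases hd.eq_or_lt' with rfl | hpos
  · simp [compSet]
  · simp [compSet, hpos, hpos.ne']

theorem neg_bmax_mem_compSet_iff {bmax amax Δt : ℝ} {Bex : ℝ → ℝ} {v d V : ℝ} (hd : 0 ≤ d) :
    -bmax ∈ compSet bmax amax Δt Bex v d V ↔
      -bmax ≤ amax ∧ 0 ≤ v - bmax * Δt ∧
      (0 < d → v * Δt - bmax * Δt ^ 2 / 2 + Bex (v - bmax * Δt) ≤ d + Bex V) ∧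
      (d = 0 → v - bmax * Δt ≤ V) := by
  simp only [mem_compSet_iff hd, left_mem_Icc, neg_mul, neg_div, ← sub_eq_add_neg]

/-- if `b_max·Δt ≤ v`, `d ≥ 0`, `V ≥ 0` and `B_ex v ≤ d + B_ex V`, then the
deceleration `a := −b_max` belongs to the compliance set `S` for the constraint `(d, V)`:
indeed `v − b_max·Δt ≥ 0`; if `d > 0` then
`v·Δt − b_max·Δt²/2 + B_ex (v − b_max·Δt) ≤ d + B_ex V`; and if `d = 0` then
`v − b_max·Δt ≤ V`. Here `B_ex` is any function satisfying the defining recursion. -/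
theorem neg_bmax_mem_compSet
    (bmax amax Δt : ℝ) (hb : 0 < bmax) (ha : 0 < amax) (ht : 0 < Δt)
    (Bex : ℝ → ℝ)
    (hBex1 : ∀ v, 0 ≤ v → v < bmax * Δt → Bex v = v * Δt / 2)
    (hBex2 : ∀ v, bmax * Δt ≤ v → Bex v = v * Δt - bmax * Δt ^ 2 / 2 + Bex (v - bmax * Δt))
    (v d V : ℝ) (hv : bmax * Δt ≤ v) (hd : 0 ≤ d) (hV : 0 ≤ V)
    (hctrl : Bex v ≤ d + Bex V) :
    -bmax ∈ compSet bmax amax Δt Bex v d V ∧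
    0 ≤ v - bmax * Δt ∧
    (0 < d → v * Δt - bmax * Δt ^ 2 / 2 + Bex (v - bmax * Δt) ≤ d + Bex V) ∧
    (d = 0 → v - bmax * Δt ≤ V) := by
  have hc : 0 < bmax * Δt := mul_pos hb ht
  have hspeed : 0 ≤ v - bmax * Δt := sub_nonneg.mpr hv
  have hfar : v * Δt - bmax * Δt ^ 2 / 2 + Bex (v - bmax * Δt) ≤ d + Bex V :=
    hBex2 v hv ▸ hctrl
  have hnear (hd0 : d = 0) : v - bmax * Δt ≤ V := by
    have hBex : Bex v ≤ Bex V := by rwa [hd0, zero_add] at hctrl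
    have hvV : v ≤ V := ((strictMonoOn_Ici_of_braking_recursion hb ht hBex1 hBex2).le_iff_le
      (hc.le.trans hv) hV).mp hBex
    exact (sub_le_self v hc.le).trans hvV
  have hrange : -bmax ≤ amax := (neg_neg_of_pos hb).le.trans ha.le
  exact ⟨(neg_bmax_mem_compSet_iff hd).mpr ⟨hrange, hspeed, fun _ ↦ hfar, hnear⟩,
    hspeed, fun _ ↦ hfar, hnear⟩
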